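/- Let n ≥ 2 and let D be an n-dimensional diagram with support contained in ℤ≥0ⁿ that has a unique source, located at the origin (so that all other nodes of D are sinks). Then D has no overhang and no outside vertical edge nodes. -/

import Mathlib

/-!
The values `P`, `N` of a diagram are the signs `1`, `-1` of `SignType`.

The idea is to climb along a line in a coordinate direction `m` whose neighbours `down_j`, `j ≠ m`,
all vanish. If some point of the line carries the sign `N`, then the next point up cannot carry `P`
or `0`, since it would then be a source, and it is not the origin because the support of `D` lies
in the nonnegative orthant. So `N` persists as long as the side neighbours vanish
(`neg_persists`).

*Overhang.* Suppose `(a, b)` is a left overhang of the projection to the coordinates `k, m`. Among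
the points of the support with `k`-th coordinate `a` and `m`-th coordinate at least `b`, take one
minimizing the sum of the coordinates other than `m`, and then the lowest one in its column. By
minimality, and because the projection misses `(a, b - 1)` and all `(a - 1, y)` with `y ≥ b`, all
its lower neighbours vanish, as do the side neighbours of the column above it. If its sign is `P`,
it is a source other than the origin; if it is `N`, the column is `N` all the way up, contradicting
the finiteness of the support. A right overhang is a left overhang with `k, m` exchanged.

*Outside vertical edges.* The origin is the only possible source, and all of its lower neighbours
vanish. A sink in the edge has sign `N`, which would persist up to the point at the top of the
edge, where `D` is zero.
-/

/-- `down_k`: subtract `1` from the `k`-th entry. -/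
def downk {n : ℕ} (k : Fin n) (α : Fin n → ℤ) : Fin n → ℤ :=
  Function.update α k (α k - 1)

/-- A sink of a diagram `D : ℤⁿ → {P,0,N}`. -/
def IsSink {n : ℕ} (D : (Fin n → ℤ) → SignType) (α : Fin n → ℤ) : Prop :=
  D α ≤ 0 ∧ (∀ k, 0 ≤ D (downk k α)) ∧ (D α ≠ 0 ∨ ∃ k, D (downk k α) ≠ 0)

/-- A source of a diagram `D : ℤⁿ → {P,0,N}`. -/
def IsSource {n : ℕ} (D : (Fin n → ℤ) → SignType) (α : Fin n → ℤ) : Prop :=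
  0 ≤ D α ∧ (∀ k, D (downk k α) ≤ 0) ∧ (D α ≠ 0 ∨ ∃ k, D (downk k α) ≠ 0)

/-- A node: a sink or a source. -/
def IsNode {n : ℕ} (D : (Fin n → ℤ) → SignType) (α : Fin n → ℤ) : Prop :=
  IsSink D α ∨ IsSource D α

/-- A set `K ⊆ ℤ²` has left overhang. -/
def HasLeftOverhang (K : Set (ℤ × ℤ)) : Prop :=
  ∃ a b : ℤ, (a, b) ∈ K ∧ (a, b) ≠ (0, 0) ∧ (a, b - 1) ∉ K ∧
    ∀ y : ℤ, b ≤ y → (a - 1, y) ∉ K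

/-- A set `K ⊆ ℤ²` has overhang: a left overhang, or a left overhang after
swapping the two coordinates. -/
def HasOverhang (K : Set (ℤ × ℤ)) : Prop :=
  HasLeftOverhang K ∨ HasLeftOverhang {p : ℤ × ℤ | (p.2, p.1) ∈ K}

/-- The projection `π(K,k,m)` of `K ⊆ ℤⁿ` to the coordinates `k`, `m`. -/
def projKM {n : ℕ} (K : Set (Fin n → ℤ)) (k m : Fin n) : Set (ℤ × ℤ) :=
  {q : ℤ × ℤ | ∃ α ∈ K, α k = q.1 ∧ α m = q.2}

/-- A diagram has no overhang if no 2-dimensional projection of its support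
has overhang. -/
def NoOverhang {n : ℕ} (D : (Fin n → ℤ) → SignType) : Prop :=
  ∀ k m : Fin n, k ≠ m → ¬ HasOverhang (projKM (Function.support D) k m)

/-- `E` is an outside vertical edge of `D`, hanging below `α` in direction
`k`: `E = {down_k(α), down_k²(α), …, down_k^r(α)}` is contained in the support
of `D`, while `D(α) = 0`, `D(down_j(α)) = 0` for all `j ≠ k`, and
`D(down_j(β)) = 0` for all `β ∈ E` and `j ≠ k`. -/
def IsOutsideVerticalEdge {n : ℕ} (D : (Fin n → ℤ) → SignType)
    (E : Set (Fin n → ℤ)) (α : Fin n → ℤ) (k : Fin n) : Prop :=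
  (∃ r : ℕ, 1 ≤ r ∧
    E = {β | ∃ i : ℕ, 1 ≤ i ∧ i ≤ r ∧ β = Function.update α k (α k - i)}) ∧
  (∀ β ∈ E, D β ≠ 0) ∧
  D α = 0 ∧ (∀ j, j ≠ k → D (downk j α) = 0) ∧
  (∀ β ∈ E, ∀ j, j ≠ k → D (downk j β) = 0)

/-- `D` has no outside vertical edge nodes: no element of an outside vertical
edge is a node, except possibly the bottom node (the `β ∈ E` with
`D(down_k(β)) = 0`). -/
def NoOutsideVerticalEdgeNodes {n : ℕ} (D : (Fin n → ℤ) → SignType) : Prop :=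
  ∀ (E : Set (Fin n → ℤ)) (α : Fin n → ℤ) (k : Fin n),
    IsOutsideVerticalEdge D E α k →
      ∀ β ∈ E, IsNode D β → D (downk k β) = 0

/-- The sign `N` propagates upwards in direction `m`, from height `s` to height `t`, when the
neighbours in all other directions vanish along the way. -/
lemma neg_persists {n : ℕ} {D : (Fin n → ℤ) → SignType}
    (hpos : ∀ α ∈ Function.support D, ∀ i, 0 ≤ α i)
    (huniq : ∀ α : Fin n → ℤ, IsSource D α → α = fun _ => 0)
    (γ : Fin n → ℤ) (m : Fin n) {s t : ℤ} (hst : s ≤ t)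
    (hs : D (Function.update γ m s) = -1)
    (hside : ∀ u, s < u → u ≤ t → ∀ j, j ≠ m → D (downk j (Function.update γ m u)) = 0) :
    D (Function.update γ m t) = -1 := by
  induction t, hst using Int.leInduction with
  | base => exact hs
  | succ u hu ih =>
    have hneg := ih fun v hv hvu => hside v hv (by lia)
    have hdown : downk m (Function.update γ m (u + 1)) = Function.update γ m u := by
      simp [downk]
    by_contra hne
    have hu0 : 0 ≤ u := by
      simpa using hpos (Function.update γ m u) (by simp [hneg]) m
    have hsrc : IsSource D (Function.update γ m (u + 1)) := by
      refine ⟨?_, fun j => ?_, Or.inr ⟨m, by rw [hdown, hneg]; decide⟩⟩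
      · generalize D (Function.update γ m (u + 1)) = x at hne
        revert x
        decide
      · by_cases hj : j = m
        · subst hj
          rw [hdown, hneg]
          decide
        · exact (hside (u + 1) (by lia) le_rfl j hj).le
    have := congrFun (huniq _ hsrc) m
    simp at this
    lia

lemma not_hasLeftOverhang_projKM {n : ℕ} {D : (Fin n → ℤ) → SignType}
    (hfin : (Function.support D).Finite)
    (hpos : ∀ α ∈ Function.support D, ∀ i, 0 ≤ α i)
    (huniq : ∀ α : Fin n → ℤ, IsSource D α → α = fun _ => 0)
    (k m : Fin n) (hkm : k ≠ m) :
    ¬ HasLeftOverhang (projKM (Function.support D) k m) := by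
  rintro ⟨a, b, ⟨α₀, hα₀, hα₀k, hα₀m⟩, hab, hbelow, hleft⟩
  simp only at hα₀k hα₀m
  have hb : 0 ≤ b := hα₀m ▸ hpos α₀ hα₀ m
  let T : Set (Fin n → ℤ) := {α | D α ≠ 0 ∧ α k = a ∧ b ≤ α m}
  have hT : T.Finite := hfin.subset fun α h => h.1
  let f : (Fin n → ℤ) → ℤ := fun α => ∑ j ∈ Finset.univ.erase m, α j
  have hfm : ∀ α t, f (Function.update α m t) = f α := fun α t =>
    Finset.sum_congr rfl fun j hj => by
      rw [Function.update_of_ne (Finset.ne_of_mem_erase hj)]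
  have hfj : ∀ α j, j ≠ m → f (downk j α) < f α := by
    intro α j hj
    refine Finset.sum_lt_sum (fun i _ => ?_) ⟨j, by simp [hj], by simp [downk]⟩
    by_cases hi : i = j
    · subst hi; simp [downk]
    · simp [downk, hi]
  obtain ⟨α, hα, hαmin⟩ := Set.exists_min_image T f hT ⟨α₀, hα₀, hα₀k, hα₀m.ge⟩
  obtain ⟨β, ⟨hβ, hβα⟩, hβmin⟩ := Set.exists_min_image {γ | γ ∈ T ∧ f γ = f α} (fun γ => γ m)
    (hT.subset fun _ h => h.1) ⟨α, hα, rfl⟩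
  obtain ⟨hβ0, hβk, hβm⟩ := hβ
  have hside : ∀ t, b ≤ t → ∀ j, j ≠ m → D (downk j (Function.update β m t)) = 0 := by
    intro t ht j hj
    by_contra hne
    by_cases hjk : j = k
    · subst hjk
      exact hleft t ht ⟨_, hne, by simp [downk, hj, hβk], by simp [downk, hj.symm]⟩
    · have h1 := hαmin _ (show downk j (Function.update β m t) ∈ T from
        ⟨hne, by simp [downk, Ne.symm hjk, hkm, hβk], by simpa [downk, hj.symm] using ht⟩)
      have h2 := hfj (Function.update β m t) j hj
      rw [hfm, hβα] at h2
      lia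
  have hdown : D (downk m β) = 0 := by
    by_contra hne
    rcases hβm.eq_or_lt with h | h
    · exact hbelow ⟨_, hne, by simp [downk, hkm, hβk], by simp [downk, h]⟩
    · have := hβmin (downk m β)
        ⟨⟨hne, by simp [downk, hkm, hβk], by simp [downk]; lia⟩, by rw [downk, hfm, hβα]⟩
      simp [downk] at this
  have hsign : D β = 1 ∨ D β = -1 := by
    generalize D β = x at hβ0
    revert x
    decide
  rcases hsign with hP | hN
  · have hsrc : IsSource D β := by
      refine ⟨by rw [hP]; decide, fun j => ?_, Or.inl hβ0⟩
      by_cases hj : j = m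
      · exact hj ▸ hdown.le
      · simpa using (hside (β m) hβm j hj).le
    have h := huniq β hsrc
    have h1 := congrFun h k
    have h2 := congrFun h m
    exact hab (Prod.ext (by simp only; lia) (by simp only; lia))
  · obtain ⟨B, hB⟩ := (hfin.image fun γ => γ m).bddAbove
    have hle : β m ≤ B := hB ⟨β, hβ0, rfl⟩
    have htop := neg_persists hpos huniq β m (show β m ≤ B + 1 by lia) (by simpa using hN)
      fun u hu _ => hside u (by lia)
    have h : Function.update β m (B + 1) m ≤ B :=
      hB ⟨Function.update β m (B + 1), by simp [htop], rfl⟩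
    simp at h

lemma noOutsideVerticalEdgeNodes_of_unique_source {n : ℕ} {D : (Fin n → ℤ) → SignType}
    (hpos : ∀ α ∈ Function.support D, ∀ i, 0 ≤ α i)
    (huniq : ∀ α : Fin n → ℤ, IsSource D α → α = fun _ => 0) :
    NoOutsideVerticalEdgeNodes D := by
  rintro E α k ⟨⟨r, _, rfl⟩, hE, hα0, hαside, hEside⟩ β hβ hnode
  have hβ0 := hE β hβ
  rcases hnode with hsink | hsrc
  · exfalso
    have hN : D β = -1 := by
      have := hsink.1
      generalize D β = x at hβ0 this
      revert x
      decide
    obtain ⟨i, hi1, hir, rfl⟩ := hβ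
    have htop := neg_persists hpos huniq α k (show α k - i ≤ α k by lia) hN ?_
    · rw [Function.update_eq_self, hα0] at htop
      exact absurd htop (by decide)
    · intro u hu huα j hj
      rcases huα.eq_or_lt with rfl | hlt
      · rw [Function.update_eq_self]
        exact hαside j hj
      · refine hEside _ ⟨(α k - u).toNat, by lia, by lia, ?_⟩ j hj
        congr 1
        lia
  · by_contra hne
    have := hpos _ hne k
    rw [huniq β hsrc] at this
    simp [downk] at this

/-- an `n`-dimensional diagram (`n ≥ 2`) with support in the
nonnegative quadrant and a unique source, located at the origin, has no
overhang and no outside vertical edge nodes. -/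
theorem stmt14 (n : ℕ) (hn : 2 ≤ n) (D : (Fin n → ℤ) → SignType)
    (hfin : (Function.support D).Finite)
    (hpos : ∀ α ∈ Function.support D, ∀ i, 0 ≤ α i)
    (h0 : IsSource D (fun _ => 0))
    (huniq : ∀ α : Fin n → ℤ, IsSource D α → α = fun _ => 0) :
    NoOverhang D ∧ NoOutsideVerticalEdgeNodes D := by
  refine ⟨fun k m hkm h => ?_, noOutsideVerticalEdgeNodes_of_unique_source hpos huniq⟩
  rcases h with h | h
  · exact not_hasLeftOverhang_projKM hfin hpos huniq k m hkm h
  · refine not_hasLeftOverhang_projKM hfin hpos huniq m k hkm.symm ?_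
    convert h using 1
    ext ⟨x, y⟩
    simp [projKM, and_comm]
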